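/- Let A ∈ ℝ^{n×n}, B ∈ ℝ^{n×p}, and K ∈ ℝ^{p×n}. Then A + BK is Hurwitz if and only if there exist a symmetric positive definite M ∈ ℝ^{n×n} and L ∈ ℝ^{p×n} such that −MAᵀ − AM − LᵀBᵀ − BL is positive definite and K = LM⁻¹. -/

import Mathlib

open Matrix

/-- A real square matrix is Hurwitz if every root in `ℂ` of its characteristic
polynomial has strictly negative real part. -/
def IsHurwitz {n : ℕ} (A : Matrix (Fin n) (Fin n) ℝ) : Prop :=
  ∀ z : ℂ, ((A.map (Complex.ofReal)).charpoly).IsRoot z → z.re < 0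

/-!
If the spectrum of an element `a` of a C⋆-algebra lies in the open left half plane, then the Euler
step `w = 1 + h a` has spectral radius below one for small `h > 0`, so `‖w ^ N‖ < 1` for some `N`
by Gelfand's formula. The sum `p = ∑_{k < N} wᵏ (wᵏ)⋆` telescopes to
`p - w p w⋆ = 1 - w ^ N (w ^ N)⋆`, which is strictly positive, and adding the nonnegative term
`(h a) p (h a)⋆` gives `-h (a p + p a⋆)`. Conversely, if `p` and `-(a p + p a⋆)` are strictly
positive and `0 ≤ re z`, then `c = (z - a) p` has `c + c⋆` strictly positive, which makes `c`
invertible, so `z` is not in the spectrum of `a`.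

For a real matrix the solution `p` may be replaced by its entrywise real part, and `L = K M` turns
the Lyapunov inequality for the closed loop into one linear in `M` and `L`.
-/

section BanachAlgebra

open Filter

variable {E : Type*} [NormedRing E] [NormedAlgebra ℂ E] [CompleteSpace E]

theorem exists_norm_pow_lt_one_of_spectralRadius_lt_one {w : E} (hw : spectralRadius ℂ w < 1) :
    ∃ N ≠ 0, ‖w ^ N‖ < 1 := by
  obtain ⟨N, hroot, hN⟩ :=
    (((spectrum.gelfand_formula w).eventually_lt_const hw).and (eventually_ne_atTop 0)).exists
  refine ⟨N, hN, ?_⟩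
  contrapose! hroot
  exact ENNReal.one_le_rpow (by exact_mod_cast hroot) (by positivity)

theorem norm_one_add_mul_lt_one {h : ℝ} {z : ℂ} (hh : 0 < h) (hz : h * ‖z‖ ^ 2 < -2 * z.re) :
    ‖1 + h * z‖ < 1 := by
  have hsq : ‖1 + h * z‖ ^ 2 = 1 + h * (2 * z.re + h * ‖z‖ ^ 2) := by
    simp only [Complex.sq_norm, Complex.normSq_apply, Complex.add_re, Complex.one_re,
      Complex.re_ofReal_mul, Complex.add_im, Complex.one_im, Complex.im_ofReal_mul]
    ring
  rw [← sq_lt_one_iff₀ (norm_nonneg _), hsq]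
  nlinarith

theorem exists_pos_spectralRadius_one_add_smul_lt_one {a : E}
    (ha : ∀ z ∈ spectrum ℂ a, z.re < 0) :
    ∃ h : ℝ, 0 < h ∧ spectralRadius ℂ (1 + h • a) < 1 := by
  obtain ⟨h, hh, hle⟩ : ∃ h : ℝ, 0 < h ∧ ∀ z ∈ spectrum ℂ a, h ≤ -2 * z.re / (‖z‖ ^ 2 + 1) := by
    refine (spectrum.isCompact a).exists_forall_le' ?_ fun z hz ↦ ?_
    · exact Continuous.continuousOn (by fun_prop (disch := intros; positivity))
    · exact div_pos (by linarith [ha z hz]) (by positivity)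
  refine ⟨h, hh, ?_⟩
  nontriviality E
  refine spectrum.spectralRadius_lt_of_forall_lt _ fun w hw ↦ ?_
  rw [← Complex.coe_smul, ← map_one (algebraMap ℂ E), ← spectrum.singleton_add_eq,
    spectrum.smul_eq_smul _ _ (spectrum.nonempty a)] at hw
  obtain ⟨_, rfl, _, ⟨z, hz, rfl⟩, rfl⟩ := hw
  refine norm_one_add_mul_lt_one hh ?_
  have := (le_div_iff₀ (by positivity)).mp (hle z hz)
  linarith

end BanachAlgebra

theorem sum_pow_mul_star_pow_sub_conjugate {R : Type*} [Ring R] [StarRing R] (w : R) (N : ℕ) :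
    ∑ k ∈ Finset.range N, w ^ k * star (w ^ k)
        - w * (∑ k ∈ Finset.range N, w ^ k * star (w ^ k)) * star w
      = 1 - w ^ N * star (w ^ N) := by
  have hshift (k : ℕ) : w * (w ^ k * star (w ^ k)) * star w = w ^ (k + 1) * star (w ^ (k + 1)) := by
    simp only [pow_succ', star_mul, mul_assoc]
  have htelescope := Finset.sum_range_sub' (fun k ↦ w ^ k * star (w ^ k)) N
  simpa only [Finset.mul_sum, Finset.sum_mul, hshift, Finset.sum_sub_distrib, pow_zero, star_one,
    mul_one] using htelescope

section CStarAlgebra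

variable {A : Type*} [CStarAlgebra A] [PartialOrder A] [StarOrderedRing A]

theorem isStrictlyPositive_one_sub_mul_star_self {z : A} (hz : ‖z‖ < 1) :
    IsStrictlyPositive (1 - z * star z) := by
  have hnorm : ‖z * star z‖ < 1 := by
    rw [CStarRing.norm_self_mul_star]
    exact mul_lt_one_of_nonneg_of_lt_one_left (norm_nonneg z) hz hz.le
  refine (isUnit_one_sub_of_norm_lt_one hnorm).isStrictlyPositive (sub_nonneg.mpr ?_)
  exact (CStarAlgebra.norm_le_one_iff_of_nonneg _ (mul_star_self_nonneg z)).mp hnorm.le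

theorem isStrictlyPositive_sum_pow_mul_star_pow (w : A) {N : ℕ} (hN : N ≠ 0) :
    IsStrictlyPositive (∑ k ∈ Finset.range N, w ^ k * star (w ^ k)) := by
  obtain ⟨m, rfl⟩ := Nat.exists_eq_succ_of_ne_zero hN
  rw [Finset.sum_range_succ', pow_zero, star_one, mul_one]
  exact .nonneg_add (Finset.sum_nonneg fun k _ ↦ mul_star_self_nonneg (w ^ (k + 1)))
    isStrictlyPositive_one

theorem exists_isStrictlyPositive_sub_conjugate {w : A} (hw : spectralRadius ℂ w < 1) :
    ∃ p : A, IsStrictlyPositive p ∧ IsStrictlyPositive (p - w * p * star w) := by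
  obtain ⟨N, hN, hnorm⟩ := exists_norm_pow_lt_one_of_spectralRadius_lt_one hw
  refine ⟨_, isStrictlyPositive_sum_pow_mul_star_pow w hN, ?_⟩
  rw [sum_pow_mul_star_pow_sub_conjugate]
  exact isStrictlyPositive_one_sub_mul_star_self hnorm

theorem exists_isStrictlyPositive_lyapunov {a : A} (ha : ∀ z ∈ spectrum ℂ a, z.re < 0) :
    ∃ p : A, IsStrictlyPositive p ∧ IsStrictlyPositive (-(a * p + p * star a)) := by
  obtain ⟨h, hh, hradius⟩ := exists_pos_spectralRadius_one_add_smul_lt_one ha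
  obtain ⟨p, hp, hstein⟩ := exists_isStrictlyPositive_sub_conjugate hradius
  have heuler : p - (1 + h • a) * p * star (1 + h • a) + (h • a) * p * star (h • a)
      = h • -(a * p + p * star a) := by
    simp only [star_add, star_one, star_smul, star_trivial, add_mul, mul_add, one_mul,
      mul_one, smul_mul_assoc, mul_smul_comm, smul_add, smul_neg]
    abel
  refine ⟨p, hp, ?_⟩
  have hscaled := hstein.add_nonneg (star_right_conjugate_nonneg hp.nonneg (h • a))
  rw [heuler] at hscaled
  simpa only [inv_smul_smul₀ hh.ne'] using hscaled.smul (inv_pos.mpr hh)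

theorem isStrictlyPositive_mul_star_self_of_add_star {c : A}
    (hc : IsStrictlyPositive (c + star c)) : IsStrictlyPositive (c * star c) := by
  nontriviality A
  obtain ⟨r, hr, hle⟩ : ∃ r > 0, algebraMap ℝ A r ≤ c + star c :=
    (CFC.exists_pos_algebraMap_le_iff hc.isSelfAdjoint).2 fun x hx ↦ hc.spectrum_pos hx
  have hdecomp : c * star c = (c - (r / 2) • 1) * star (c - (r / 2) • 1)
      + (r / 2) • (c + star c - algebraMap ℝ A r) + ((r / 2) ^ 2) • 1 := by
    simp only [Algebra.algebraMap_eq_smul_one, star_sub, star_smul, star_one, star_trivial,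
      sub_mul, mul_sub, smul_mul_assoc, mul_smul_comm, one_mul, mul_one]
    module
  rw [hdecomp]
  refine .nonneg_add ?_ (isStrictlyPositive_one.smul (by positivity))
  exact add_nonneg (mul_star_self_nonneg _) (smul_nonneg (by positivity) (sub_nonneg.mpr hle))

theorem isUnit_of_isStrictlyPositive_add_star {c : A} (hc : IsStrictlyPositive (c + star c)) :
    IsUnit c := by
  have hright := (isStrictlyPositive_mul_star_self_of_add_star hc).isUnit
  have hstar : IsStrictlyPositive (star c + star (star c)) := by rwa [star_star, add_comm]
  have hleft : IsUnit (star c * c) := by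
    simpa only [star_star] using (isStrictlyPositive_mul_star_self_of_add_star hstar).isUnit
  obtain ⟨b, hb⟩ := hright.exists_right_inv
  obtain ⟨d, hd⟩ := hleft.exists_left_inv
  exact isUnit_iff_exists_and_exists.mpr
    ⟨⟨star c * b, by rwa [← mul_assoc]⟩, ⟨d * star c, by rwa [mul_assoc]⟩⟩

theorem re_neg_of_mem_spectrum_of_lyapunov {a p : A} (hp : IsStrictlyPositive p)
    (hap : IsStrictlyPositive (-(a * p + p * star a))) {z : ℂ} (hz : z ∈ spectrum ℂ a) :
    z.re < 0 := by
  by_contra! hre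
  refine hz ?_
  have hsum : (algebraMap ℂ A z - a) * p + star ((algebraMap ℂ A z - a) * p)
      = -(a * p + p * star a) + (2 * z.re) • p := by
    have hz_add_conj : z • p + star z • p = (2 * z.re) • p := by
      rw [← add_smul, ← starRingEnd_apply, Complex.add_conj, Complex.coe_smul]
    rw [← hz_add_conj, star_mul, hp.isSelfAdjoint.star_eq]
    simp only [Algebra.algebraMap_eq_smul_one, star_sub, star_smul, star_one, sub_mul, mul_sub,
      smul_mul_assoc, mul_smul_comm, one_mul, mul_one]
    abel
  have hunit : IsUnit ((algebraMap ℂ A z - a) * p) :=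
    isUnit_of_isStrictlyPositive_add_star
      (hsum ▸ hap.add_nonneg (smul_nonneg (by positivity) hp.nonneg))
  exact hp.isUnit.mul_right_iff.mp hunit

theorem forall_mem_spectrum_re_neg_iff_exists_lyapunov {a : A} :
    (∀ z ∈ spectrum ℂ a, z.re < 0) ↔
      ∃ p : A, IsStrictlyPositive p ∧ IsStrictlyPositive (-(a * p + p * star a)) :=
  ⟨exists_isStrictlyPositive_lyapunov, fun ⟨_, hp, hap⟩ _ hz ↦
    re_neg_of_mem_spectrum_of_lyapunov hp hap hz⟩

end CStarAlgebra

section PosDef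

open scoped ComplexOrder MatrixOrder

variable {ι 𝕜 : Type*} [Finite ι] [RCLike 𝕜]

theorem posDef_map_algebraMap {M : Matrix ι ι ℝ} (hM : M.PosDef) :
    (M.map (algebraMap ℝ 𝕜)).PosDef := by
  classical
  cases nonempty_fintype ι
  obtain ⟨R, hR, rfl⟩ :=
    CStarAlgebra.isStrictlyPositive_iff_eq_star_mul_self.mp hM.isStrictlyPositive
  have hunit : IsUnit (R.map (algebraMap ℝ 𝕜)) := hR.map (algebraMap ℝ 𝕜).mapMatrix
  rw [Matrix.map_mul, star_eq_conjTranspose,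
    conjTranspose_map _ (algebraMap_star_comm (R := ℝ) (A := 𝕜))]
  exact .conjTranspose_mul_self _ (mulVec_injective_of_isUnit hunit)

theorem posDef_map_re {M : Matrix ι ι 𝕜} (hM : M.PosDef) : (M.map RCLike.re).PosDef := by
  cases nonempty_fintype ι
  refine .of_dotProduct_mulVec_pos ?_ fun x hx ↦ ?_
  · ext i j
    simpa using congrArg RCLike.re (congrFun₂ hM.isHermitian i j)
  · have hx' : (fun i ↦ (x i : 𝕜)) ≠ 0 := fun h ↦ hx (funext fun i ↦ by simpa using congrFun h i)
    simpa [dotProduct, mulVec, Finset.mul_sum]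
      using (RCLike.pos_iff.mp (hM.dotProduct_mulVec_pos hx')).1

end PosDef

section Matrix

variable {ι : Type*} [Fintype ι]

open scoped Matrix.Norms.L2Operator ComplexOrder MatrixOrder in
theorem forall_mem_spectrum_re_neg_iff_exists_posDef [DecidableEq ι] {A : Matrix ι ι ℂ} :
    (∀ z ∈ spectrum ℂ A, z.re < 0) ↔
      ∃ M : Matrix ι ι ℂ, M.PosDef ∧ (-(A * M + M * Aᴴ)).PosDef := by
  simpa only [isStrictlyPositive_iff_posDef, star_eq_conjTranspose] using
    forall_mem_spectrum_re_neg_iff_exists_lyapunov (a := A)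

open scoped ComplexOrder in
theorem forall_mem_spectrum_map_ofReal_re_neg_iff_exists_posDef [DecidableEq ι] {A : Matrix ι ι ℝ} :
    (∀ z ∈ spectrum ℂ (A.map Complex.ofReal), z.re < 0) ↔
      ∃ M : Matrix ι ι ℝ, M.PosDef ∧ (-(A * M + M * Aᵀ)).PosDef := by
  rw [forall_mem_spectrum_re_neg_iff_exists_posDef]
  constructor
  · rintro ⟨M, hM, hAM⟩
    refine ⟨M.map RCLike.re, posDef_map_re hM, ?_⟩
    have hre : (-(A.map Complex.ofReal * M + M * (A.map Complex.ofReal)ᴴ)).map RCLike.re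
        = -(A * M.map RCLike.re + M.map RCLike.re * Aᵀ) := by
      ext i j
      simp [mul_apply]
    exact hre ▸ posDef_map_re hAM
  · rintro ⟨M, hM, hAM⟩
    refine ⟨M.map (algebraMap ℝ ℂ), posDef_map_algebraMap hM, ?_⟩
    have hmap : (-(A * M + M * Aᵀ)).map (algebraMap ℝ ℂ) = -(A.map Complex.ofReal
        * M.map (algebraMap ℝ ℂ) + M.map (algebraMap ℝ ℂ) * (A.map Complex.ofReal)ᴴ) := by
      ext i j
      simp [mul_apply]
    exact hmap ▸ posDef_map_algebraMap hAM

theorem neg_lyapunov_add_mul {R κ : Type*} [CommRing R] [Fintype κ] (A : Matrix ι ι R)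
    (B : Matrix ι κ R) (K : Matrix κ ι R) {M : Matrix ι ι R} (hM : M.IsSymm) :
    -(M * Aᵀ) - A * M - (K * M)ᵀ * Bᵀ - B * (K * M)
      = -((A + B * K) * M + M * (A + B * K)ᵀ) := by
  simp only [transpose_mul, transpose_add, hM.eq, Matrix.mul_add, Matrix.add_mul, Matrix.mul_assoc]
  abel

end Matrix

theorem stmt6_general {ι κ : Type*} [Fintype ι] [DecidableEq ι] [Fintype κ]
    (A : Matrix ι ι ℝ) (B : Matrix ι κ ℝ) (K : Matrix κ ι ℝ) :
    (∀ z ∈ spectrum ℂ ((A + B * K).map Complex.ofReal), z.re < 0) ↔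
      ∃ (M : Matrix ι ι ℝ) (L : Matrix κ ι ℝ),
        M.PosDef ∧ (-(M * Aᵀ) - A * M - Lᵀ * Bᵀ - B * L).PosDef ∧ K = L * M⁻¹ := by
  rw [forall_mem_spectrum_map_ofReal_re_neg_iff_exists_posDef]
  constructor
  · rintro ⟨M, hM, hlyap⟩
    refine ⟨M, K * M, hM, ?_, ?_⟩
    · rwa [neg_lyapunov_add_mul A B K (isHermitian_iff_isSymm.mp hM.isHermitian)]
    · exact (mul_nonsing_inv_cancel_right _ _ ((isUnit_iff_isUnit_det M).mp hM.isUnit)).symm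
  · rintro ⟨M, L, hM, hLMI, rfl⟩
    refine ⟨M, hM, ?_⟩
    rwa [← neg_lyapunov_add_mul A B _ (isHermitian_iff_isSymm.mp hM.isHermitian),
      nonsing_inv_mul_cancel_right _ _ ((isUnit_iff_isUnit_det M).mp hM.isUnit)]

/-- Full-state feedback stabilization LMI: the closed loop `A + BK` is Hurwitz
iff there are `M ≻ 0` (symmetric) and `L` with
`−MAᵀ − AM − LᵀBᵀ − BL ≻ 0` and `K = L M⁻¹`. -/
theorem stmt6 {n p : ℕ}
    (A : Matrix (Fin n) (Fin n) ℝ) (B : Matrix (Fin n) (Fin p) ℝ)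
    (K : Matrix (Fin p) (Fin n) ℝ) :
    IsHurwitz (A + B * K) ↔
      ∃ (M : Matrix (Fin n) (Fin n) ℝ) (L : Matrix (Fin p) (Fin n) ℝ),
        M.PosDef ∧ (-(M * Aᵀ) - A * M - Lᵀ * Bᵀ - B * L).PosDef ∧ K = L * M⁻¹ := by
  simpa only [IsHurwitz, ← mem_spectrum_iff_isRoot_charpoly] using stmt6_general A B K
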